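/- Let J : R^d -> R be Lipschitz and let delta > 0. Then the delta-smoothed function hat{J}(theta) = E_{v ~ Unif(B_d)}[J(theta + delta*v)] is differentiable and the two-point sphere estimator is unbiased for its gradient: for every theta in R^d, E_{u ~ Unif(S^{d-1})}[ d*( J(theta + delta*u) - J(theta - delta*u) )/(2*delta) * u ] = grad hat{J}(theta). -/

import Mathlib

/-!
By Rademacher's theorem `J` is differentiable almost everywhere, with derivative bounded by its
Lipschitz constant, so the smoothed function can be differentiated under the integral: its
derivative at `θ` in direction `w` is `δ⁻¹` times the mean over the unit ball of the derivative of
`g v = J (θ + δ v)` in direction `w`.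

The mean over the ball becomes a mean over the sphere by the divergence theorem
`∫_{B} ∂_w g = ∫_{S} g(u) ⟪u, w⟫` for Lipschitz `g` (`setIntegral_lineDeriv_ball`). To prove it,
integrate `∂_w g` by parts against the cone `(R - ‖x‖)₊`, whose gradient is `-x / ‖x‖` inside the
ball of radius `R`. In polar coordinates this gives
`∫ ∂_w g(x) (R - ‖x‖)₊ dx = ∫_0^R r^(d-1) ∫_S g(r u) ⟪u, w⟫ dσ(u) dr`
(`integral_lineDeriv_mul_cone`), and differentiating both sides at `R = 1` yields the claim.

Applying the divergence theorem to `v ↦ J (θ + δ v)` and `v ↦ J (θ - δ v)` and using the symmetry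
of the ball shows that both halves of the two-point estimator contribute equally. The normalising
constants match because `σ(S) = d vol(B)` (`integral_uniformSphere`).
-/

open MeasureTheory Metric

/-- The uniform probability measure on the closed Euclidean unit ball in `ℝ^d`. -/
noncomputable def uniformBall (d : ℕ) : Measure (EuclideanSpace ℝ (Fin d)) :=
  (volume (closedBall (0 : EuclideanSpace ℝ (Fin d)) 1))⁻¹ •
    volume.restrict (closedBall (0 : EuclideanSpace ℝ (Fin d)) 1)

/-- The uniform probability measure on the Euclidean unit sphere in `ℝ^d`
(the normalized surface measure, pushed forward to `ℝ^d`). -/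
noncomputable def uniformSphere (d : ℕ) : Measure (EuclideanSpace ℝ (Fin d)) :=
  (((volume : Measure (EuclideanSpace ℝ (Fin d))).toSphere Set.univ)⁻¹ •
    (volume : Measure (EuclideanSpace ℝ (Fin d))).toSphere).map Subtype.val

section

open Set
open Module (finrank)

variable {E : Type*} [NormedAddCommGroup E] [InnerProductSpace ℝ E]

theorem hasFDerivAt_norm_of_ne_zero {x : E} (hx : x ≠ 0) :
    HasFDerivAt (fun y : E => ‖y‖) (‖x‖⁻¹ • innerSL ℝ x) x := by
  have h := (hasStrictFDerivAt_norm_sq x).hasFDerivAt.sqrt (by simpa using hx)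
  simp only [Real.sqrt_sq (norm_nonneg _)] at h
  convert h using 1
  ext y
  simp
  ring

/-- The derivative of the cone `y ↦ (R - ‖y‖)₊` in direction `-w`, away from the apex and from the
sphere of radius `R`. -/
theorem lineDeriv_cone {R : ℝ} (w : E) {x : E} (hx : x ≠ 0) (hxR : ‖x‖ ≠ R) :
    lineDeriv ℝ (fun y : E => max (R - ‖y‖) 0) x (-w)
      = (ball (0 : E) R).indicator (fun x => ‖x‖⁻¹ * inner ℝ x w) x := by
  rcases lt_or_gt_of_ne hxR with h | h
  · have hev : (fun y : E => max (R - ‖y‖) 0) =ᶠ[nhds x] fun y => R - ‖y‖ := by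
      filter_upwards [(isOpen_lt continuous_norm continuous_const).mem_nhds h] with y hy
      exact max_eq_left (sub_nonneg.2 (le_of_lt hy))
    have hd := ((hasFDerivAt_norm_of_ne_zero hx).const_sub R).congr_of_eventuallyEq hev
    rw [hd.hasLineDerivAt (-w) |>.lineDeriv]
    simp [indicator, h]
  · have hev : (fun y : E => max (R - ‖y‖) 0) =ᶠ[nhds x] fun y => 0 := by
      filter_upwards [(isOpen_lt continuous_const continuous_norm).mem_nhds h] with y hy
      exact max_eq_right (sub_nonpos.2 (le_of_lt hy))
    have hd := (hasFDerivAt_const (𝕜 := ℝ) (0 : ℝ) x).congr_of_eventuallyEq hev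
    rw [hd.hasLineDerivAt (-w) |>.lineDeriv]
    simp [indicator, h.le]

variable [FiniteDimensional ℝ E] [MeasurableSpace E] [BorelSpace E] [Nontrivial E]

/-- Integration in polar coordinates for an arbitrary integrable function. -/
theorem integral_polar (μ : Measure E) [μ.IsAddHaarMeasure] {f : E → ℝ} (hf : Integrable f μ) :
    ∫ x, f x ∂μ =
      ∫ r in Ioi (0 : ℝ), r ^ (finrank ℝ E - 1) * ∫ u, f (r • (u : E)) ∂μ.toSphere := by
  have hmp := μ.measurePreserving_homeomorphUnitSphereProd
  have hme := (homeomorphUnitSphereProd E).measurableEmbedding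
  set P : sphere (0 : E) 1 × Ioi (0 : ℝ) → ℝ := fun p => f ((p.2 : ℝ) • (p.1 : E)) with hP
  have hPc : ∀ x : ({0}ᶜ : Set E), P (homeomorphUnitSphereProd E x) = f x := by
    intro x
    have : (x : E) ≠ 0 := x.2
    simp [hP, smul_smul, this]
  have hint : Integrable P (μ.toSphere.prod (.volumeIoiPow (finrank ℝ E - 1))) := by
    rw [← hmp.integrable_comp_emb hme]
    have : IntegrableOn f {0}ᶜ μ := hf.integrableOn
    rw [integrableOn_iff_comap_subtypeVal (by measurability)] at this
    refine this.congr (.of_forall fun x => (hPc x).symm)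
  calc ∫ x, f x ∂μ = ∫ x : ({(0)}ᶜ : Set E), f x ∂(μ.comap (↑)) := by
        rw [integral_subtype_comap (measurableSet_singleton _).compl f,
          restrict_compl_singleton]
    _ = ∫ p, P p ∂(μ.toSphere.prod (.volumeIoiPow (finrank ℝ E - 1))) := by
        rw [← hmp.integral_comp hme]; simp only [hPc]
    _ = ∫ r : Ioi (0 : ℝ), ∫ u, f ((r : ℝ) • (u : E)) ∂μ.toSphere
          ∂(.volumeIoiPow (finrank ℝ E - 1)) := integral_prod_symm _ hint
    _ = _ := by
        simp only [Measure.volumeIoiPow, ENNReal.ofReal]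
        rw [integral_withDensity_eq_integral_smul, integral_subtype_comap measurableSet_Ioi
          fun a : ℝ ↦ Real.toNNReal (a ^ (finrank ℝ E - 1)) •
            ∫ u, f (a • (u : E)) ∂μ.toSphere,
          setIntegral_congr_fun measurableSet_Ioi fun x hx ↦ ?_]
        · simp only [NNReal.smul_def, Real.coe_toNNReal _ (pow_nonneg (le_of_lt hx) _), smul_eq_mul]
        · exact (measurable_subtype_coe.pow_const _).real_toNNReal

theorem setIntegral_ball_polar (μ : Measure E) [μ.IsAddHaarMeasure] {f : E → ℝ} {R : ℝ}
    (hR : 0 < R) (hf : IntegrableOn f (ball 0 R) μ) :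
    ∫ x in ball 0 R, f x ∂μ =
      ∫ r in (0 : ℝ)..R, r ^ (finrank ℝ E - 1) * ∫ u, f (r • (u : E)) ∂μ.toSphere := by
  rw [← integral_indicator measurableSet_ball,
    integral_polar μ ((integrable_indicator_iff measurableSet_ball).2 hf),
    intervalIntegral.integral_of_le hR.le, ← integral_Ioc_eq_integral_Ioo.symm,
    ← integral_indicator measurableSet_Ioi, ← integral_indicator measurableSet_Ioo]
  congr 1
  ext r
  by_cases h0 : 0 < r
  · have (u : sphere (0 : E) 1) : ‖r • (u : E)‖ = r := by simp [norm_smul, abs_of_pos h0]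
    by_cases h1 : r < R <;> simp [indicator, h0, h1, norm_smul, abs_of_pos h0]
  · simp [indicator, h0]

/-- Integration by parts against the cone of radius `R`, with the result written in polar
coordinates. The left side is the integral over radii in `(0, R)` of the ball integrals of the
directional derivative, so this is the divergence theorem integrated over the radius. -/
theorem integral_lineDeriv_mul_cone (μ : Measure E) [μ.IsAddHaarMeasure] {g : E → ℝ} {C : NNReal}
    (hg : LipschitzWith C g) (w : E) {R : ℝ} (hR : 0 < R) :
    ∫ x, lineDeriv ℝ g x w * max (R - ‖x‖) 0 ∂μ =
      ∫ r in (0 : ℝ)..R, r ^ (finrank ℝ E - 1) *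
        ∫ u, g (r • (u : E)) * inner ℝ (u : E) w ∂μ.toSphere := by
  have hL : LipschitzWith 1 (fun y : E => max (R - ‖y‖) 0) := by
    refine LipschitzWith.max_const (LipschitzWith.of_dist_le_mul fun x y => ?_) 0
    rw [Real.dist_eq, dist_eq_norm, NNReal.coe_one, one_mul, sub_sub_sub_cancel_left, abs_sub_comm]
    exact abs_norm_sub_norm_le x y
  have hcs : HasCompactSupport (fun y : E => max (R - ‖y‖) 0) := by
    refine HasCompactSupport.of_support_subset_isCompact (isCompact_closedBall 0 R) fun x hx => ?_
    simp only [Function.mem_support] at hx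
    by_contra h
    simp only [mem_closedBall, dist_zero_right, not_le] at h
    exact hx (max_eq_right (by linarith))
  rw [hg.integral_lineDeriv_mul_eq hL hcs]
  have hae : ∀ᵐ x ∂μ, lineDeriv ℝ (fun y : E => max (R - ‖y‖) 0) x (-w) * g x =
      (ball (0 : E) R).indicator (fun x => ‖x‖⁻¹ * inner ℝ x w * g x) x := by
    have h1 : ∀ᵐ x ∂μ, x ∉ ({0} : Set E) := measure_eq_zero_iff_ae_notMem.1 (measure_singleton 0)
    have h2 : ∀ᵐ x ∂μ, x ∉ sphere (0 : E) R :=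
      measure_eq_zero_iff_ae_notMem.1 (Measure.addHaar_sphere μ 0 R)
    filter_upwards [h1, h2] with x hx hxR
    rw [lineDeriv_cone w (by simpa using hx) (by simpa using hxR)]
    by_cases h : x ∈ ball (0 : E) R <;> simp only [indicator, h, if_true, if_false, zero_mul]
  rw [integral_congr_ae hae, integral_indicator measurableSet_ball,
    setIntegral_ball_polar μ hR]
  · rw [intervalIntegral.integral_of_le hR.le, intervalIntegral.integral_of_le hR.le]
    refine setIntegral_congr_fun measurableSet_Ioc fun r hr => ?_
    have h0 : 0 < r := hr.1
    congr 1
    refine integral_congr_ae (.of_forall fun u => ?_)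
    simp [norm_smul, abs_of_pos h0, inner_smul_left, h0.ne', mul_comm]
  · have hgi : IntegrableOn (fun x => ‖w‖ * ‖g x‖) (ball 0 R) μ :=
      (((hg.continuous.norm.const_mul _).continuousOn (s := closedBall 0 R)).integrableOn_compact
        (isCompact_closedBall 0 R)).mono_set ball_subset_closedBall
    refine hgi.mono' ?_ (.of_forall fun x => ?_)
    · have := hg.continuous.measurable
      have h2 : Measurable fun x : E => inner ℝ x w := (by fun_prop : Continuous _).measurable
      exact ((measurable_norm.inv.mul h2).mul this).aestronglyMeasurable
    · rw [norm_mul]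
      gcongr
      rw [norm_mul, norm_inv, norm_norm]
      rcases eq_or_ne x 0 with rfl | hx
      · simp
      · rw [inv_mul_le_iff₀ (norm_pos_iff.2 hx)]
        exact norm_inner_le_norm x w

/-- The divergence theorem on the unit ball for the vector field `g w`, with `g` Lipschitz and `w`
constant: it is the derivative of `integral_lineDeriv_mul_cone` at `R = 1`. -/
theorem setIntegral_lineDeriv_ball (μ : Measure E) [μ.IsAddHaarMeasure] {g : E → ℝ} {C : NNReal}
    (hg : LipschitzWith C g) (w : E) :
    ∫ x in closedBall 0 1, lineDeriv ℝ g x w ∂μ =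
      ∫ u, g (u : E) * inner ℝ (u : E) w ∂μ.toSphere := by
  set ρ : ℝ → ℝ := fun r => r ^ (finrank ℝ E - 1) *
        ∫ u, g (r • (u : E)) * inner ℝ (u : E) w ∂μ.toSphere with hρ
  have hρc : Continuous ρ := by
    refine (continuous_pow _).mul ?_
    have := hg.continuous
    have hc : Continuous (Function.uncurry fun (r : ℝ) (u : sphere (0 : E) 1) =>
      g (r • (u : E)) * inner ℝ (u : E) w) := by unfold Function.uncurry; fun_prop
    have := continuous_parametric_integral_of_continuous (μ := μ.toSphere) hc isCompact_univ
    simpa using this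
  -- The right side of the cone identity is differentiated by the fundamental theorem of calculus.
  have h1 : HasDerivAt (fun R => ∫ r in (0 : ℝ)..R, ρ r) (ρ 1) 1 :=
    intervalIntegral.integral_hasDerivAt_right (hρc.intervalIntegrable _ _)
      hρc.stronglyMeasurable.stronglyMeasurableAtFilter hρc.continuousAt
  have hm : Measurable fun x => lineDeriv ℝ g x w := measurable_lineDeriv hg.continuous
  have hb (x : E) : ‖lineDeriv ℝ g x w‖ ≤ C * ‖w‖ := norm_lineDeriv_le_of_lipschitz ℝ hg
  have hbi : Integrable ((ball (0 : E) 2).indicator fun _ => (C * ‖w‖ : ℝ)) μ :=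
    (integrable_indicator_iff measurableSet_ball).2 (integrableOn_const measure_ball_lt_top.ne)
  -- The left side is differentiated under the integral: for `‖x‖ ≠ 1` the derivative of
  -- `(R - ‖x‖)₊` at `R = 1` is the indicator of the ball, and the integrands with `R < 2` all
  -- vanish off `ball 0 2`.
  have h2 := (hasDerivAt_integral_of_dominated_loc_of_lip (μ := μ) (𝕜 := ℝ) (x₀ := (1 : ℝ))
    (s := Ioo 0 2) (F := fun R x => lineDeriv ℝ g x w * max (R - ‖x‖) 0)
    (F' := (closedBall (0 : E) 1).indicator fun x => lineDeriv ℝ g x w)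
    (bound := (ball (0 : E) 2).indicator fun _ => (C * ‖w‖ : ℝ))
    (Ioo_mem_nhds (by norm_num) (by norm_num))
    (.of_forall fun R => by
      exact (hm.mul ((measurable_const.sub measurable_norm).max
        measurable_const)).aestronglyMeasurable)
    (by
      refine hbi.mono' (hm.mul ((measurable_const.sub measurable_norm).max
        measurable_const)).aestronglyMeasurable (.of_forall fun x => ?_)
      by_cases hx : ‖x‖ < 2
      · rw [indicator_of_mem (by simpa using hx), norm_mul]
        have : ‖max (1 - ‖x‖) 0‖ ≤ 1 := by
          rw [Real.norm_of_nonneg (le_max_right _ _)]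
          exact max_le (by linarith [norm_nonneg x]) zero_le_one
        nlinarith [hb x, norm_nonneg (lineDeriv ℝ g x w)]
      · rw [max_eq_right (by linarith), mul_zero, norm_zero]
        exact indicator_nonneg (fun _ _ => by positivity) _)
    (hm.indicator measurableSet_closedBall).aestronglyMeasurable
    (.of_forall fun x => by
      refine LipschitzOnWith.of_dist_le_mul fun a ha b hb' => ?_
      rw [Real.coe_nnabs, Real.dist_eq, Real.dist_eq, ← mul_sub, abs_mul]
      by_cases hx : ‖x‖ < 2
      · rw [indicator_of_mem (by simpa using hx), abs_of_nonneg (a := (C : ℝ) * ‖w‖) (by positivity)]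
        refine mul_le_mul (hb x) ?_ (abs_nonneg _) (by positivity)
        refine (abs_max_sub_max_le_abs _ _ _).trans (le_of_eq ?_)
        congr 1; ring
      · rw [max_eq_right (by linarith [ha.2]), max_eq_right (by linarith [hb'.2])]
        simp only [sub_self, abs_zero, mul_zero]; positivity)
    hbi
    (by
      have hs : ∀ᵐ x ∂μ, x ∉ sphere (0 : E) 1 :=
        measure_eq_zero_iff_ae_notMem.1 (Measure.addHaar_sphere μ 0 1)
      filter_upwards [hs] with x hx
      have hx : ‖x‖ ≠ 1 := by simpa using hx
      rcases lt_or_gt_of_ne hx with h | h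
      · rw [indicator_of_mem (by simpa using h.le)]
        have hd := (((hasDerivAt_id (1 : ℝ)).sub_const ‖x‖).const_mul (lineDeriv ℝ g x w))
        rw [mul_one] at hd
        refine hd.congr_of_eventuallyEq ?_
        filter_upwards [lt_mem_nhds h] with R hR
        rw [max_eq_left (by linarith)]; rfl
      · rw [indicator_of_notMem (by simpa using h)]
        refine (hasDerivAt_const (1 : ℝ) (0 : ℝ)).congr_of_eventuallyEq ?_
        filter_upwards [gt_mem_nhds h] with R hR
        rw [max_eq_right (by linarith), mul_zero])).2
  have h3 : (fun R => ∫ x, lineDeriv ℝ g x w * max (R - ‖x‖) 0 ∂μ) =ᶠ[nhds 1]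
      fun R => ∫ r in (0 : ℝ)..R, ρ r := by
    filter_upwards [lt_mem_nhds one_pos] with R hR
    exact integral_lineDeriv_mul_cone μ hg w hR
  have h4 := (h2.congr_of_eventuallyEq h3.symm).unique h1
  rw [integral_indicator measurableSet_closedBall] at h4
  rw [h4]
  simp [hρ]
end

theorem setIntegral_closedBall_comp_neg {E : Type*} [NormedAddCommGroup E] [MeasurableSpace E]
    [BorelSpace E] (μ : Measure E) [μ.IsNegInvariant] (f : E → ℝ) (R : ℝ) :
    ∫ x in closedBall 0 R, f (-x) ∂μ = ∫ x in closedBall 0 R, f x ∂μ := by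
  have h := (Measure.measurePreserving_neg μ).setIntegral_preimage_emb
    (MeasurableEquiv.neg E).measurableEmbedding f (closedBall 0 R)
  simpa using h

theorem integral_uniformBall {F : Type*} [NormedAddCommGroup F] [NormedSpace ℝ F] (d : ℕ)
    (f : EuclideanSpace ℝ (Fin d) → F) :
    ∫ v, f v ∂(uniformBall d) =
      (volume.real (closedBall (0 : EuclideanSpace ℝ (Fin d)) 1))⁻¹ •
        ∫ v in closedBall 0 1, f v := by
  rw [uniformBall, integral_smul_measure, ENNReal.toReal_inv, measureReal_def]

/-- The surface measure of the unit sphere is `d` times the volume of the unit ball; this is where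
the factor `d` of the estimator comes from. -/
theorem integral_uniformSphere {F : Type*} [NormedAddCommGroup F] [NormedSpace ℝ F] (d : ℕ)
    (f : EuclideanSpace ℝ (Fin d) → F) :
    ∫ u, f u ∂(uniformSphere d) =
      (d * volume.real (closedBall (0 : EuclideanSpace ℝ (Fin d)) 1))⁻¹ •
        ∫ u : sphere (0 : EuclideanSpace ℝ (Fin d)) 1, f u
          ∂(volume : Measure (EuclideanSpace ℝ (Fin d))).toSphere := by
  rw [uniformSphere, (MeasurableEmbedding.subtype_coe isClosed_sphere.measurableSet).integral_map,
    integral_smul_measure, ENNReal.toReal_inv, Measure.toSphere_apply_univ, ENNReal.toReal_mul,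
    measureReal_def, Measure.addHaar_unitClosedBall_eq_addHaar_unitBall]
  simp

/-- the smoothed function of a Lipschitz function is differentiable, and the
two-point sphere estimator is unbiased for its gradient. -/
theorem two_point_unbiased (d : ℕ) (hd : 1 ≤ d) (δ : ℝ) (hδ : 0 < δ)
    (J : EuclideanSpace ℝ (Fin d) → ℝ) (G : NNReal) (hJ : LipschitzWith G J) :
    Differentiable ℝ (fun θ : EuclideanSpace ℝ (Fin d) =>
        ∫ v, J (θ + δ • v) ∂(uniformBall d)) ∧
      ∀ θ : EuclideanSpace ℝ (Fin d),
        (∫ u, (((d : ℝ) * (J (θ + δ • u) - J (θ - δ • u)) / (2 * δ)) • u)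
            ∂(uniformSphere d))
          = gradient (fun θ' => ∫ v, J (θ' + δ • v) ∂(uniformBall d)) θ := by
  have : Nonempty (Fin d) := ⟨⟨0, hd⟩⟩
  have hJc := hJ.continuous
  set B : Set (EuclideanSpace ℝ (Fin d)) := closedBall 0 1 with hB
  set c : ℝ := volume.real B with hc
  -- Used with `s = δ` and, for the reflected function, with `s = -δ`.
  have hlip (θ : EuclideanSpace ℝ (Fin d)) (s : ℝ) :
      LipschitzWith (G * ‖s‖₊) fun v => J (θ + s • v) :=
    hJ.comp (LipschitzWith.of_dist_le_mul fun x y => by simp [dist_smul₀])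
  have hfin : IsFiniteMeasure (volume.restrict B) :=
    ⟨by simpa [hB] using measure_closedBall_lt_top⟩
  have hder (θ : EuclideanSpace ℝ (Fin d)) :
      Integrable (fun v => δ⁻¹ • fderiv ℝ (fun v => J (θ + δ • v)) v) (volume.restrict B) ∧
      HasFDerivAt (fun θ' => ∫ v in B, J (θ' + δ • v))
        (∫ v in B, δ⁻¹ • fderiv ℝ (fun v => J (θ + δ • v)) v) θ := by
    refine hasFDerivAt_integral_of_dominated_loc_of_lip (s := Set.univ) (bound := fun _ => (G : ℝ))
      Filter.univ_mem
      (.of_forall fun θ' => (hlip θ' δ).continuous.aestronglyMeasurable)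
      ((hlip θ δ).continuous.continuousOn.integrableOn_compact (isCompact_closedBall 0 1))
      ((measurable_fderiv ℝ _).const_smul δ⁻¹).aestronglyMeasurable
      (.of_forall fun v => ?_) (integrable_const _) ?_
    · refine LipschitzOnWith.of_dist_le_mul fun x _ y _ => ?_
      simpa using hJ.dist_le_mul (x + δ • v) (y + δ • v)
    · refine ae_restrict_of_ae ?_
      filter_upwards [(hlip θ δ).ae_differentiableAt (μ := volume)] with v hv
      -- Dependence on the centre is a translation: `J (η + δ v) = J (θ + δ (v + δ⁻¹ (η - θ)))`.
      have hA : HasFDerivAt (fun θ' => v + δ⁻¹ • (θ' - θ))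
          (δ⁻¹ • ContinuousLinearMap.id ℝ (EuclideanSpace ℝ (Fin d))) θ :=
        (((hasFDerivAt_id θ).sub_const θ).const_smul δ⁻¹).const_add v
      have hv' : HasFDerivAt (fun v => J (θ + δ • v)) (fderiv ℝ (fun v => J (θ + δ • v)) v)
          (v + δ⁻¹ • (θ - θ)) := by simpa using hv.hasFDerivAt
      have h := hv'.comp θ hA
      convert h using 1
      · ext θ'
        simp only [Function.comp_apply, smul_add, smul_smul, mul_inv_cancel₀ hδ.ne', one_smul]
        congr 1; abel
      · ext w; simp
  have hder' (θ : EuclideanSpace ℝ (Fin d)) :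
      HasFDerivAt (fun θ' => ∫ v, J (θ' + δ • v) ∂(uniformBall d))
        (c⁻¹ • ∫ v in B, δ⁻¹ • fderiv ℝ (fun v => J (θ + δ • v)) v) θ := by
    simp only [integral_uniformBall]
    exact (hder θ).2.const_smul c⁻¹
  refine ⟨fun θ => (hder' θ).differentiableAt, fun θ => ?_⟩
  have hlin (w : EuclideanSpace ℝ (Fin d)) :
      ∫ u : sphere (0 : EuclideanSpace ℝ (Fin d)) 1, J (θ + δ • (u : EuclideanSpace ℝ (Fin d))) *
        inner ℝ (u : EuclideanSpace ℝ (Fin d)) w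
        ∂(volume : Measure (EuclideanSpace ℝ (Fin d))).toSphere =
      ∫ v in B, lineDeriv ℝ (fun v => J (θ + δ • v)) v w :=
    (setIntegral_lineDeriv_ball volume (hlip θ δ) w).symm
  have hneg (w : EuclideanSpace ℝ (Fin d)) :
      ∫ u : sphere (0 : EuclideanSpace ℝ (Fin d)) 1, J (θ - δ • (u : EuclideanSpace ℝ (Fin d))) *
        inner ℝ (u : EuclideanSpace ℝ (Fin d)) w
        ∂(volume : Measure (EuclideanSpace ℝ (Fin d))).toSphere =
      - ∫ v in B, lineDeriv ℝ (fun v => J (θ + δ • v)) v w := by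
    -- The integral of the reflected function changes sign because the ball is symmetric.
    have h := setIntegral_lineDeriv_ball volume (hlip θ (-δ)) w
    simp only [neg_smul, ← sub_eq_add_neg] at h
    rw [← h, ← setIntegral_closedBall_comp_neg, ← integral_neg]
    refine integral_congr_ae (.of_forall fun v => ?_)
    simp only [lineDeriv]
    have h := deriv_comp_neg (fun t : ℝ => J (θ + δ • (v + t • w))) 0
    rw [neg_zero] at h
    rw [← h]
    congr 1
    ext t
    congr 1
    module
  refine ext_inner_right ℝ fun w => ?_
  have hgrad : inner ℝ (gradient (fun θ' => ∫ v, J (θ' + δ • v) ∂(uniformBall d)) θ) w =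
      c⁻¹ * (δ⁻¹ * ∫ v in B, lineDeriv ℝ (fun v => J (θ + δ • v)) v w) := by
    rw [gradient, InnerProductSpace.toDual_symm_apply, (hder' θ).fderiv,
      _root_.smul_apply, ContinuousLinearMap.integral_apply (hder θ).1, smul_eq_mul,
      ← integral_const_mul δ⁻¹]
    congr 1
    refine integral_congr_ae (ae_restrict_of_ae ?_)
    filter_upwards [(hlip θ δ).ae_differentiableAt (μ := volume)] with v hv
    rw [hv.lineDeriv_eq_fderiv]; simp
  have hint (f : EuclideanSpace ℝ (Fin d) → ℝ) (hf : Continuous f) :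
      Integrable (fun u : sphere (0 : EuclideanSpace ℝ (Fin d)) 1 => f u)
        (volume : Measure (EuclideanSpace ℝ (Fin d))).toSphere :=
    (hf.comp continuous_subtype_val).integrable_of_hasCompactSupport
      (HasCompactSupport.of_compactSpace _)
  have hintv : Integrable (fun u : sphere (0 : EuclideanSpace ℝ (Fin d)) 1 =>
      ((d : ℝ) * (J (θ + δ • (u : EuclideanSpace ℝ (Fin d))) -
        J (θ - δ • (u : EuclideanSpace ℝ (Fin d)))) / (2 * δ)) • (u : EuclideanSpace ℝ (Fin d)))
        (volume : Measure (EuclideanSpace ℝ (Fin d))).toSphere :=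
    Continuous.integrable_of_hasCompactSupport (by fun_prop) (HasCompactSupport.of_compactSpace _)
  rw [hgrad, integral_uniformSphere, real_inner_smul_left, real_inner_comm, ← integral_inner hintv]
  have hpt (u : EuclideanSpace ℝ (Fin d)) :
      inner ℝ w (((d : ℝ) * (J (θ + δ • u) - J (θ - δ • u)) / (2 * δ)) • u) =
      (d / (2 * δ)) * (J (θ + δ • u) * inner ℝ u w - J (θ - δ • u) * inner ℝ u w) := by
    rw [real_inner_smul_right, real_inner_comm]; ring
  simp only [hpt]
  rw [integral_const_mul, integral_sub (hint (fun u => J (θ + δ • u) * inner ℝ u w) (by fun_prop))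
    (hint (fun u => J (θ - δ • u) * inner ℝ u w) (by fun_prop)), hlin, hneg]
  have hd0 : (d : ℝ) ≠ 0 := by positivity
  have hc0 : c ≠ 0 := 
    (ENNReal.toReal_pos (measure_closedBall_pos _ _ one_pos).ne' measure_closedBall_lt_top.ne).ne'
  rw [← hB, ← hc]
  field_simp
  ring
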